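/- For general points: ℓ(L(5e+2, 5e−5, 6^{2e})) = 5 − 2e for 1 ≤ e ≤ 2 (virtual dimension −2e − 5); ℓ(L(5e+3, 5e−4, 6^{2e})) = 9 − 2e for 1 ≤ e ≤ 4 (virtual dimension −2e + 3); ℓ(L(5e+4, 5e−3, 6^{2e})) = 14 − 2e for 1 ≤ e ≤ 7 (virtual dimension −2e + 11); and ℓ(L(5e+5, 5e−2, 6^{2e})) = 20 − 2e for 1 ≤ e ≤ 10 (virtual dimension −2e + 19); in particular all these systems are special. -/

import Mathlib

open MvPolynomial

/-- The iterated partial derivative corresponding to the multi-index `ν`. -/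
noncomputable def mderiv (ν : Fin 3 → ℕ) :
    MvPolynomial (Fin 3) ℂ →ₗ[ℂ] MvPolynomial (Fin 3) ℂ :=
  ((pderiv (R := ℂ) (0 : Fin 3)).toLinearMap ^ ν 0) ∘ₗ
  ((pderiv (R := ℂ) (1 : Fin 3)).toLinearMap ^ ν 1) ∘ₗ
  ((pderiv (R := ℂ) (2 : Fin 3)).toLinearMap ^ ν 2)

/-- The linear system `L(d; m)` of homogeneous forms of degree `d` in three variables
all of whose partial derivatives of order `< m i` vanish at the point `p i`,
i.e. plane curves of degree `d` with multiplicity at least `m i` at `p i`. -/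
noncomputable def linSys {k : ℕ} (p : Fin k → Fin 3 → ℂ) (d : ℕ) (m : Fin k → ℕ) :
    Submodule ℂ (MvPolynomial (Fin 3) ℂ) :=
  (homogeneousSubmodule (Fin 3) ℂ d) ⊓
    ⨅ (i : Fin k), ⨅ (ν : Fin 3 → ℕ), ⨅ (_ : ν 0 + ν 1 + ν 2 < m i),
      LinearMap.ker ((aeval (p i)).toLinearMap ∘ₗ mderiv ν)

/-- The projective dimension `ℓ` of the linear system (`-1` means empty). -/
noncomputable def projDim {k : ℕ} (p : Fin k → Fin 3 → ℂ) (d : ℕ) (m : Fin k → ℕ) : ℤ :=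
  (Module.finrank ℂ (linSys p d m) : ℤ) - 1

/-- The virtual dimension `v = d(d+3)/2 - ∑ mᵢ(mᵢ+1)/2`. -/
def virtDim {k : ℕ} (d : ℕ) (m : Fin k → ℕ) : ℤ :=
  ((d : ℤ) * (d + 3)) / 2 - ∑ i : Fin k, ((m i : ℤ) * (m i + 1)) / 2

/-- The quasi-homogeneous multiplicity vector `(m₀, 6, …, 6)` on `n + 1` points. -/
def qh (n m0 : ℕ) : Fin (n + 1) → ℕ := fun i => if i = 0 then m0 else 6

/-- A property `Q` of configurations of `k` points of `ℙ²` (given by nonzero homogeneous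
coordinate vectors) holds for points in general position: there is a nonzero polynomial
in the coordinates such that `Q` holds whenever it does not vanish. -/
def Generically (k : ℕ) (Q : (Fin k → Fin 3 → ℂ) → Prop) : Prop :=
  ∃ P : MvPolynomial (Fin k × Fin 3) ℂ, P ≠ 0 ∧
    ∀ p : Fin k → Fin 3 → ℂ, (∀ i, p i ≠ 0) →
      eval (fun x => p x.1 x.2) P ≠ 0 → Q p

theorem pderiv_commute (i j : Fin 3) :
    Commute (pderiv (R := ℂ) i).toLinearMap (pderiv (R := ℂ) j).toLinearMap := by
  have h : ⁅pderiv (R := ℂ) i, pderiv (R := ℂ) j⁆ = 0 := by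
    refine MvPolynomial.derivation_ext fun k => ?_
    simp only [Derivation.commutator_apply, pderiv_X, Derivation.coe_zero, Pi.zero_apply]
    simp only [Pi.single_apply, apply_ite, pderiv_one, map_zero, ite_self, sub_self]
  refine LinearMap.ext fun f => ?_
  have := congrArg (fun D => D f) h
  simpa [Derivation.commutator_apply, sub_eq_zero] using this

theorem mderiv_eq (ν : Fin 3 → ℕ) :
    mderiv ν = (pderiv (R := ℂ) (0 : Fin 3)).toLinearMap ^ ν 0 *
      ((pderiv (R := ℂ) (1 : Fin 3)).toLinearMap ^ ν 1 *
        (pderiv (R := ℂ) (2 : Fin 3)).toLinearMap ^ ν 2) := rfl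

theorem mderiv_pderiv (ν : Fin 3 → ℕ) (j : Fin 3) (f : MvPolynomial (Fin 3) ℂ) :
    mderiv ν (pderiv j f) = mderiv (ν + Pi.single j 1) f := by
  have key : mderiv (ν + Pi.single j 1) = mderiv ν * (pderiv (R := ℂ) j).toLinearMap := by
    have h01 := (pderiv_commute 0 1).pow_right (ν 1)
    have h02 := (pderiv_commute 0 2).pow_right (ν 2)
    have h12 := (pderiv_commute 1 2).pow_right (ν 2)
    rw [mderiv_eq, mderiv_eq]
    fin_cases j <;> simp [pow_succ, mul_assoc]
    · rw [h01.left_comm, h02.eq]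
    · rw [h12.eq]
  rw [key]; rfl

theorem mderiv_zero (f : MvPolynomial (Fin 3) ℂ) : mderiv 0 f = f := by
  simp [mderiv_eq]

/-- All partial derivatives of `f` of order `< m` vanish at `p`. -/
def VanishesTo (p : Fin 3 → ℂ) (m : ℕ) (f : MvPolynomial (Fin 3) ℂ) : Prop :=
  ∀ ν : Fin 3 → ℕ, ν 0 + ν 1 + ν 2 < m → aeval p (mderiv ν f) = 0

theorem mem_linSys {k : ℕ} {p : Fin k → Fin 3 → ℂ} {d : ℕ} {m : Fin k → ℕ}
    {f : MvPolynomial (Fin 3) ℂ} :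
    f ∈ linSys p d m ↔ f.IsHomogeneous d ∧ ∀ i, VanishesTo (p i) (m i) f := by
  simp [linSys, VanishesTo, Submodule.mem_iInf]

theorem vanishesTo_zero (p : Fin 3 → ℂ) (f : MvPolynomial (Fin 3) ℂ) : VanishesTo p 0 f :=
  fun _ h => absurd h (Nat.not_lt_zero _)

theorem VanishesTo.mono {p : Fin 3 → ℂ} {m n : ℕ} {f : MvPolynomial (Fin 3) ℂ}
    (h : VanishesTo p n f) (hmn : m ≤ n) : VanishesTo p m f :=
  fun ν hν => h ν (hν.trans_le hmn)

theorem sum_add_single (ν : Fin 3 → ℕ) (j : Fin 3) :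
    (ν + Pi.single j 1 : Fin 3 → ℕ) 0 + (ν + Pi.single j 1 : Fin 3 → ℕ) 1 +
        (ν + Pi.single j 1 : Fin 3 → ℕ) 2 =
      ν 0 + ν 1 + ν 2 + 1 := by
  fin_cases j <;> simp <;> omega

theorem exists_eq_add_single {ν : Fin 3 → ℕ} (h : ν ≠ 0) :
    ∃ (j : Fin 3) (μ : Fin 3 → ℕ), ν = μ + Pi.single j 1 := by
  obtain ⟨j, hj⟩ := Function.ne_iff.mp h
  refine ⟨j, ν - Pi.single j 1, ?_⟩
  have : Pi.single j 1 ≤ ν := by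
    intro i
    rcases eq_or_ne i j with rfl | hij
    · simpa using Nat.one_le_iff_ne_zero.mpr hj
    · simp [hij]
  exact (tsub_add_cancel_of_le this).symm

theorem vanishesTo_succ {p : Fin 3 → ℂ} {m : ℕ} {f : MvPolynomial (Fin 3) ℂ} :
    VanishesTo p (m + 1) f ↔ aeval p f = 0 ∧ ∀ j, VanishesTo p m (pderiv j f) := by
  constructor
  · intro h
    refine ⟨by simpa [mderiv_zero] using h 0 (by simp), fun j ν hν => ?_⟩
    rw [mderiv_pderiv]
    exact h _ (by rw [sum_add_single]; omega)
  · rintro ⟨h0, h⟩ ν hν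
    rcases eq_or_ne ν 0 with rfl | hne
    · rwa [mderiv_zero]
    · obtain ⟨j, μ, rfl⟩ := exists_eq_add_single hne
      rw [← mderiv_pderiv]
      exact h j μ (by rw [sum_add_single] at hν; omega)

theorem VanishesTo.add {p : Fin 3 → ℂ} {m : ℕ} {f g : MvPolynomial (Fin 3) ℂ}
    (hf : VanishesTo p m f) (hg : VanishesTo p m g) : VanishesTo p m (f + g) := fun ν hν => by
  rw [map_add, map_add, hf ν hν, hg ν hν, add_zero]

theorem VanishesTo.mul {p : Fin 3 → ℂ} {m n : ℕ} {f g : MvPolynomial (Fin 3) ℂ}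
    (hf : VanishesTo p m f) (hg : VanishesTo p n g) : VanishesTo p (m + n) (f * g) := by
  induction hN : m + n generalizing m n f g with
  | zero => exact vanishesTo_zero _ _
  | succ N ih =>
    rw [vanishesTo_succ]
    constructor
    · rcases Nat.eq_zero_or_pos m with rfl | hm
      · obtain rfl : n = N + 1 := by omega
        rw [map_mul, (vanishesTo_succ.mp hg).1, mul_zero]
      · obtain ⟨m, rfl⟩ := Nat.exists_eq_add_of_le' hm
        rw [map_mul, (vanishesTo_succ.mp hf).1, zero_mul]
    · intro j
      rw [pderiv_mul]
      refine VanishesTo.add ?_ ?_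
      · rcases m with _ | m
        · obtain rfl : n = N + 1 := by omega
          exact ih (vanishesTo_zero _ _) (hg.mono (Nat.le_succ N)) (by omega)
        · exact ih ((vanishesTo_succ.mp hf).2 j) hg (by omega)
      · rcases n with _ | n
        · obtain rfl : m = N + 1 := by omega
          exact ih (hf.mono (Nat.le_succ N)) (vanishesTo_zero _ _) (by omega)
        · exact ih hf ((vanishesTo_succ.mp hg).2 j) (by omega)

theorem VanishesTo.pow {p : Fin 3 → ℂ} {m : ℕ} {f : MvPolynomial (Fin 3) ℂ}
    (hf : VanishesTo p m f) (n : ℕ) : VanishesTo p (n * m) (f ^ n) := by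
  induction n with
  | zero => simpa using vanishesTo_zero p _
  | succ n ih => rw [pow_succ, Nat.succ_mul]; exact ih.mul hf

/-- By Euler's identity, for a form it is enough to test the derivatives of the top order. -/
theorem vanishesTo_of_top_order {p : Fin 3 → ℂ} {m d : ℕ} {f : MvPolynomial (Fin 3) ℂ}
    (hf : f.IsHomogeneous d) (hmd : m ≤ d)
    (h : ∀ ν : Fin 3 → ℕ, ν 0 + ν 1 + ν 2 = m → aeval p (mderiv ν f) = 0) :
    VanishesTo p (m + 1) f := by
  induction m generalizing d f with
  | zero => exact fun ν hν => h ν (by omega)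
  | succ m ih =>
    have hd : ∀ j, VanishesTo p (m + 1) (pderiv j f) := fun j =>
      ih hf.pderiv (by omega) fun ν hν => by
        rw [mderiv_pderiv]
        exact h _ (by rw [sum_add_single]; omega)
    refine vanishesTo_succ.mpr ⟨?_, hd⟩
    have hE := congrArg (aeval p) hf.sum_X_mul_pderiv
    rw [map_sum, Finset.sum_eq_zero (fun j _ => by
      rw [map_mul, (vanishesTo_succ.mp (hd j)).1, mul_zero]), map_nsmul] at hE
    exact (smul_eq_zero.mp hE.symm).resolve_left (by omega)

/-- Pairs of natural numbers with sum `< n`. -/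
def tri (n : ℕ) : Finset (ℕ × ℕ) := (Finset.range n).biUnion fun s => Finset.HasAntidiagonal.antidiagonal s

theorem mem_tri {n : ℕ} {x : ℕ × ℕ} : x ∈ tri n ↔ x.1 + x.2 < n := by
  simp [tri]

theorem card_tri (n : ℕ) : (tri n).card = (n + 1).choose 2 := by
  rw [tri, Finset.card_biUnion]
  · simp only [Finset.Nat.card_antidiagonal]
    induction n with
    | zero => rfl
    | succ n ih =>
      rw [Finset.sum_range_succ, ih, Nat.choose_succ_succ' (n + 1) 1, Nat.choose_one_right, add_comm]
  · intro i _ j _ hij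
    rw [Function.onFun, Finset.disjoint_left]
    intro x hi hj
    rw [Finset.HasAntidiagonal.mem_antidiagonal] at hi hj
    exact hij (hi.symm.trans hj)

instance finiteDimensional_homogeneousSubmodule (d : ℕ) :
    FiniteDimensional ℂ (homogeneousSubmodule (Fin 3) ℂ d) :=
  Submodule.finiteDimensional_of_le (S₂ := restrictTotalDegree (Fin 3) ℂ d) fun _ hf =>
    (mem_restrictTotalDegree _ _ _).mpr ((mem_homogeneousSubmodule _ _).mp hf).totalDegree_le

instance finiteDimensional_linSys {k : ℕ} (p : Fin k → Fin 3 → ℂ) (d : ℕ) (m : Fin k → ℕ) :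
    FiniteDimensional ℂ (linSys p d m) :=
  Submodule.finiteDimensional_of_le (S₂ := homogeneousSubmodule (Fin 3) ℂ d) inf_le_left

theorem choose_le_finrank_homogeneousSubmodule (d : ℕ) :
    (d + 2).choose 2 ≤ Module.finrank ℂ (homogeneousSubmodule (Fin 3) ℂ d) := by
  let s : tri (d + 1) → (Fin 3 →₀ ℕ) := fun x =>
    Finsupp.equivFunOnFinite.symm ![x.1.1, x.1.2, d - x.1.1 - x.1.2]
  have hs : Function.Injective s := by
    intro x y hxy
    have h0 := DFunLike.congr_fun hxy 0
    have h1 := DFunLike.congr_fun hxy 1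
    simp only [s, Finsupp.equivFunOnFinite_symm_apply_apply, Matrix.cons_val_zero,
      Matrix.cons_val_one] at h0 h1
    exact Subtype.ext (Prod.ext h0 h1)
  have hmem : ∀ x, (basisMonomials (Fin 3) ℂ) (s x) ∈ homogeneousSubmodule (Fin 3) ℂ d := by
    intro x
    have hx := mem_tri.mp x.2
    rw [coe_basisMonomials, mem_homogeneousSubmodule]
    refine isHomogeneous_monomial _ ?_
    rw [Finsupp.degree_eq_sum, Fin.sum_univ_three]
    simp [s]
    omega
  have hli : LinearIndependent ℂ
      (fun x => (⟨_, hmem x⟩ : homogeneousSubmodule (Fin 3) ℂ d)) := by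
    refine LinearIndependent.of_comp (Submodule.subtype _) ?_
    exact (basisMonomials (Fin 3) ℂ).linearIndependent.comp s hs
  have := hli.fintype_card_le_finrank
  rwa [Fintype.card_coe, card_tri] at this

/-- The dimension count: a point of multiplicity `m` imposes at most `m (m + 1) / 2` conditions. -/
theorem choose_le_finrank_linSys_add {k : ℕ} (p : Fin k → Fin 3 → ℂ) (d : ℕ) (m : Fin k → ℕ)
    (hm : ∀ i, m i ≤ d + 1) :
    (d + 2).choose 2 ≤ Module.finrank ℂ (linSys p d m) + ∑ i, (m i + 1).choose 2 := by
  let V := homogeneousSubmodule (Fin 3) ℂ d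
  let T : V →ₗ[ℂ] ((x : Σ i, tri (m i)) → ℂ) := LinearMap.pi fun x =>
    ((aeval (p x.1)).toLinearMap ∘ₗ
      mderiv ![x.2.1.1, x.2.1.2, m x.1 - 1 - x.2.1.1 - x.2.1.2]) ∘ₗ V.subtype
  have hker : (LinearMap.ker T).map V.subtype ≤ linSys p d m := by
    rintro _ ⟨f, hf, rfl⟩
    have hf : T f = 0 := hf
    refine mem_linSys.mpr ⟨(mem_homogeneousSubmodule _ _).mp f.2, fun i => ?_⟩
    rcases hmi : m i with _ | n
    · exact vanishesTo_zero _ _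
    · refine vanishesTo_of_top_order ((mem_homogeneousSubmodule _ _).mp f.2)
        (by have := hm i; omega) fun ν hν => ?_
      have := congrFun hf ⟨i, ⟨(ν 0, ν 1), mem_tri.mpr (by rw [hmi]; dsimp only; omega)⟩⟩
      have hν' : ![ν 0, ν 1, m i - 1 - ν 0 - ν 1] = ν := by
        ext j; fin_cases j <;> simp; omega
      simpa [T, hν'] using this
  have h1 : Module.finrank ℂ (LinearMap.ker T) ≤ Module.finrank ℂ (linSys p d m) := by
    rw [← Submodule.finrank_map_subtype_eq]
    exact Submodule.finrank_mono hker
  have h2 := T.finrank_range_add_finrank_ker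
  have h3 : Module.finrank ℂ (LinearMap.range T) ≤ ∑ i, (m i + 1).choose 2 := by
    refine (Submodule.finrank_le _).trans ?_
    simp [card_tri]
  have h4 := choose_le_finrank_homogeneousSubmodule d
  change _ ≤ Module.finrank ℂ V at h4
  omega

/-- Upper semicontinuity of the dimension of the space cut out by linear conditions whose
coefficients are polynomials in parameters. -/
theorem exists_finrank_ker_le {V σ ι : Type*} [AddCommGroup V] [Module ℂ V]
    [FiniteDimensional ℂ V] [Finite ι] (T : ι → V →ₗ[ℂ] MvPolynomial σ ℂ) (p₀ : σ → ℂ) :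
    ∃ P : MvPolynomial σ ℂ, eval p₀ P ≠ 0 ∧ ∀ p : σ → ℂ, eval p P ≠ 0 →
      Module.finrank ℂ (LinearMap.ker (LinearMap.pi fun i => (aeval p).toLinearMap ∘ₗ T i)) ≤
      Module.finrank ℂ (LinearMap.ker (LinearMap.pi fun i => (aeval p₀).toLinearMap ∘ₗ T i)) := by
  classical
  have := Fintype.ofFinite ι
  let ev : (σ → ℂ) → V →ₗ[ℂ] (ι → ℂ) := fun p =>
    LinearMap.pi fun i => (aeval p).toLinearMap ∘ₗ T i
  obtain ⟨U, hU⟩ := (LinearMap.ker (ev p₀)).exists_isCompl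
  have hinj : LinearMap.ker ((ev p₀).domRestrict U) = ⊥ := by
    rw [LinearMap.ker_domRestrict]
    exact (Submodule.disjoint_iff_comap_eq_bot).mp hU.disjoint.symm
  obtain ⟨g, hg⟩ := LinearMap.exists_leftInverse_of_injective _ hinj
  let b := Module.finBasis ℂ U
  let M : Matrix _ _ (MvPolynomial σ ℂ) := Matrix.of fun a c =>
    ∑ i, C (b.repr (g (Pi.single i 1)) a) * T i (b c)
  have hM : ∀ p, (eval p).mapMatrix M = LinearMap.toMatrix b b (g ∘ₗ (ev p).domRestrict U) := by
    intro p
    ext a c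
    have hw : ev p (b c) = ∑ i, (eval p (T i (b c))) • Pi.single i (1 : ℂ) := by
      rw [pi_eq_sum_univ' (ev p (b c))]
      refine Finset.sum_congr rfl fun i _ => ?_
      congr 1
    rw [LinearMap.toMatrix_apply, LinearMap.comp_apply, LinearMap.domRestrict_apply, hw]
    simp [M, mul_comm]
  have hdet : ∀ p, eval p M.det = LinearMap.det (g ∘ₗ (ev p).domRestrict U) := by
    intro p
    rw [RingHom.map_det, hM, LinearMap.det_toMatrix]
  refine ⟨M.det, ?_, fun p hp => ?_⟩
  · rw [hdet, hg]; simp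
  · rw [hdet] at hp
    have hk : LinearMap.ker (g ∘ₗ (ev p).domRestrict U) = ⊥ := by
      by_contra h
      exact hp (LinearMap.det_eq_zero_iff_ker_ne_bot.mpr h)
    have hdis : Disjoint U (LinearMap.ker (ev p)) := by
      rw [Submodule.disjoint_iff_comap_eq_bot, ← LinearMap.ker_domRestrict, eq_bot_iff, ← hk]
      exact LinearMap.ker_le_ker_comp _ _
    have h1 := Submodule.finrank_add_finrank_le_of_disjoint hdis
    have h2 := Submodule.finrank_add_eq_of_isCompl hU
    change Module.finrank ℂ (LinearMap.ker (ev p)) ≤ Module.finrank ℂ (LinearMap.ker (ev p₀))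
    omega

theorem exists_finrank_linSys_le {k : ℕ} (p₀ : Fin k → Fin 3 → ℂ) (d : ℕ) (m : Fin k → ℕ) :
    ∃ P : MvPolynomial (Fin k × Fin 3) ℂ, P ≠ 0 ∧ ∀ p : Fin k → Fin 3 → ℂ,
      eval (fun x => p x.1 x.2) P ≠ 0 →
      Module.finrank ℂ (linSys p d m) ≤ Module.finrank ℂ (linSys p₀ d m) := by
  let ι := {x : Fin k × (Fin 3 → ℕ) // x.2 0 + x.2 1 + x.2 2 < m x.1}
  have hfin : Finite ι := by
    refine Set.Finite.to_subtype ((Set.finite_univ.prod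
      (Set.finite_Iic fun _ => ∑ i, m i)).subset fun x hx => ⟨trivial, fun j => ?_⟩)
    have h1 : x.2 0 + x.2 1 + x.2 2 < m x.1 := hx
    have h2 := Finset.single_le_sum (fun i _ => Nat.zero_le (m i)) (Finset.mem_univ x.1)
    dsimp only
    fin_cases j <;> simp only [Fin.zero_eta, Fin.mk_one, Fin.reduceFinMk] <;> omega
  let T : ι → homogeneousSubmodule (Fin 3) ℂ d →ₗ[ℂ] MvPolynomial (Fin k × Fin 3) ℂ := fun x =>
    ((rename (R := ℂ) fun j => (x.1.1, j)).toLinearMap ∘ₗ mderiv x.1.2) ∘ₗ Submodule.subtype _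
  have hlin : ∀ p : Fin k → Fin 3 → ℂ, Module.finrank ℂ (linSys p d m) =
      Module.finrank ℂ (LinearMap.ker (LinearMap.pi fun i =>
        (aeval fun x : Fin k × Fin 3 => p x.1 x.2).toLinearMap ∘ₗ T i)) := by
    intro p
    rw [← Submodule.finrank_map_subtype_eq]
    suffices h : linSys p d m = Submodule.map (homogeneousSubmodule (Fin 3) ℂ d).subtype
        (LinearMap.ker (LinearMap.pi fun i =>
          (aeval fun x : Fin k × Fin 3 => p x.1 x.2).toLinearMap ∘ₗ T i)) by rw [h]
    ext f
    rw [mem_linSys, Submodule.mem_map]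
    have key : ∀ (x : ι) (f : homogeneousSubmodule (Fin 3) ℂ d),
        aeval (fun x : Fin k × Fin 3 => p x.1 x.2) (T x f) = aeval (p x.1.1) (mderiv x.1.2 f) := by
      intro x f
      exact aeval_rename _ _ _
    constructor
    · rintro ⟨hf, h⟩
      refine ⟨⟨f, (mem_homogeneousSubmodule _ _).mpr hf⟩, ?_, rfl⟩
      rw [LinearMap.mem_ker]
      ext x
      rw [LinearMap.pi_apply, LinearMap.comp_apply, AlgHom.toLinearMap_apply, key]
      exact h _ _ x.2
    · rintro ⟨f, hf, rfl⟩
      rw [LinearMap.mem_ker] at hf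
      refine ⟨(mem_homogeneousSubmodule _ _).mp f.2, fun i ν hν => ?_⟩
      have h := congrFun hf ⟨(i, ν), hν⟩
      rwa [LinearMap.pi_apply, LinearMap.comp_apply, AlgHom.toLinearMap_apply, key] at h
  obtain ⟨P, hP, h⟩ := exists_finrank_ker_le T fun x => p₀ x.1 x.2
  refine ⟨P, fun h0 => hP (by rw [h0, map_zero]), fun p hp => ?_⟩
  rw [hlin, hlin]
  exact h _ hp

theorem sum_choose_cons (n m₀ m : ℕ) :
    ∑ i, ((Fin.cons m₀ fun _ => m : Fin (n + 1) → ℕ) i + 1).choose 2 =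
      (m₀ + 1).choose 2 + n * (m + 1).choose 2 := by
  simp [Fin.sum_univ_succ]

theorem qh_eq_cons (n m₀ : ℕ) : qh n m₀ = Fin.cons m₀ fun _ => 6 := by
  ext i
  refine Fin.cases ?_ (fun j => ?_) i <;> simp [qh]

/-- The curve of degree `e` with multiplicity `e - 1` at the first point and passing through the
other `2e` points is a `(7 - k)`-fold fixed component; the residual system has the expected
dimension at least. -/
theorem choose_le_finrank_linSys_qh {e k : ℕ} (he : 1 ≤ e) (hk : 2 ≤ k) (hk7 : k ≤ 7)
    (p : Fin (2 * e + 1) → Fin 3 → ℂ) :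
    (k + 2).choose 2 ≤
      Module.finrank ℂ (linSys p (5 * e + k) (qh (2 * e) (5 * e + k - 7))) + 2 * e := by
  obtain ⟨e, rfl⟩ := Nat.exists_eq_add_of_le' he
  obtain ⟨k, rfl⟩ := Nat.exists_eq_add_of_le' hk
  obtain ⟨A, hA, hA0⟩ : ∃ A ∈ linSys p (e + 1) (Fin.cons e fun _ => 1), A ≠ 0 := by
    have h := choose_le_finrank_linSys_add p (e + 1) (Fin.cons e fun _ => 1) fun i => by
      refine Fin.cases ?_ (fun j => ?_) i <;> simp only [Fin.cons_zero, Fin.cons_succ] <;> omega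
    rw [sum_choose_cons] at h
    refine Submodule.exists_mem_ne_zero_of_ne_bot fun hbot => ?_
    rw [hbot, finrank_bot, ← Nat.cast_le (α := ℚ)] at h
    push_cast [Nat.cast_choose_two] at h
    linarith
  rw [mem_linSys] at hA
  have hle : (linSys p (k * (e + 1) + (k + 2)) (Fin.cons (k * (e + 1)) fun _ => k + 1)).map
      (LinearMap.mulLeft ℂ (A ^ (5 - k))) ≤
      linSys p (5 * (e + 1) + (k + 2)) (qh (2 * (e + 1)) (5 * (e + 1) + (k + 2) - 7)) := by
    rintro _ ⟨f, hf, rfl⟩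
    rw [SetLike.mem_coe, mem_linSys] at hf
    obtain ⟨r, hr⟩ : ∃ r, r + k = 5 := ⟨5 - k, by omega⟩
    have hre : r * e + k * e = 5 * e := by rw [← add_mul, hr]
    rw [LinearMap.mulLeft_apply, mem_linSys, qh_eq_cons, ← hr, Nat.add_sub_cancel, hr]
    refine ⟨?_, fun i => ?_⟩
    · convert (hA.1.pow r).mul hf.1 using 1
      rw [← hr]; ring
    · have h := ((hA.2 i).pow r).mul (hf.2 i)
      refine h.mono ?_
      refine Fin.cases ?_ (fun j => ?_) i
      · simp only [Fin.cons_zero, mul_add]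
        omega
      · simp only [Fin.cons_succ]
        omega
  have hinj : Function.Injective (LinearMap.mulLeft ℂ (A ^ (5 - k))) :=
    mul_right_injective₀ (pow_ne_zero _ hA0)
  have h1 := Submodule.finrank_mono hle
  rw [← (Submodule.equivMapOfInjective _ hinj _).finrank_eq] at h1
  have h2 := choose_le_finrank_linSys_add p (k * (e + 1) + (k + 2))
    (Fin.cons (k * (e + 1)) fun _ => k + 1) fun i => by
      refine Fin.cases ?_ (fun j => ?_) i
      · simp only [Fin.cons_zero]; omega
      · simp only [Fin.cons_succ]; nlinarith
  rw [sum_choose_cons] at h2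
  have h3 : (k * (e + 1) + (k + 2) + 2).choose 2 + 2 * (e + 1) =
      (k * (e + 1) + 1).choose 2 + 2 * (e + 1) * (k + 1 + 1).choose 2 + (k + 2 + 2).choose 2 := by
    rw [← Nat.cast_inj (R := ℚ)]
    push_cast [Nat.cast_choose_two]
    ring
  omega

theorem aeval_mul_of_isHomogeneous {σ A : Type*} [Fintype σ] [CommRing A] [Algebra ℂ A]
    {f : MvPolynomial σ ℂ} {d : ℕ} (hf : f.IsHomogeneous d) (c : A) (g : σ → A) :
    aeval (fun j => c * g j) f = c ^ d * aeval g f := by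
  rw [aeval_def, aeval_def, eval₂_eq', eval₂_eq', Finset.mul_sum]
  refine Finset.sum_congr rfl fun s hs => ?_
  have hd : ∑ i, s i = d := by
    have h := hf (mem_support_iff.mp hs)
    simpa [Finsupp.weight_apply, Finsupp.sum_fintype] using h
  simp only [mul_pow, Finset.prod_mul_distrib, Finset.prod_pow_eq_pow_sum, ← hd]
  ring

theorem derivation_aeval {S : Type*} [CommRing S] [Algebra ℂ S] (δ : Derivation ℂ S S)
    (θ : MvPolynomial (Fin 3) ℂ →ₐ[ℂ] S) (f : MvPolynomial (Fin 3) ℂ) :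
    δ (θ f) = ∑ j, θ (pderiv j f) * δ (θ (X j)) := by
  induction f using MvPolynomial.induction_on with
  | C a => simp [← algebraMap_eq]
  | add f g hf hg => simp [hf, hg, add_mul, Finset.sum_add_distrib]
  | mul_X f i hf =>
    simp only [map_mul, Derivation.leibniz, hf, smul_eq_mul, pderiv_X, map_add, add_mul,
      Finset.sum_add_distrib, Finset.mul_sum, Pi.single_apply]
    congr 1
    · rw [Finset.sum_eq_single i] <;> simp +contextual [eq_comm]
    · exact Finset.sum_congr rfl fun j _ => by ring

/-- If `θ` maps the locus `ℓ = 0` to the projective point `p`, then it pulls back a form vanishing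
at `p` to order `m` to a multiple of `ℓ ^ m`. -/
theorem pow_dvd_of_vanishesTo {S : Type*} [CommRing S] [IsDomain S] [Algebra ℂ S]
    (δ : Derivation ℂ S S) {ℓ : S} (hℓ : ℓ ≠ 0) (hδ : IsUnit (δ ℓ))
    (θ : MvPolynomial (Fin 3) ℂ →ₐ[ℂ] S) {p : Fin 3 → ℂ} (c : S)
    (hθ : ∀ j, ℓ ∣ θ (X j) - c * algebraMap ℂ S (p j)) {m d : ℕ} {f : MvPolynomial (Fin 3) ℂ}
    (hf : f.IsHomogeneous d) (h : VanishesTo p m f) : ℓ ^ m ∣ θ f := by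
  induction m generalizing d f with
  | zero => simp
  | succ m ih =>
    obtain ⟨u, hu⟩ := ih hf (h.mono m.le_succ)
    rcases m with _ | m
    · have h0 : Ideal.Quotient.mk (Ideal.span {ℓ}) (θ f) = 0 := by
        have h1 : (Ideal.Quotient.mkₐ ℂ (Ideal.span {ℓ})).comp θ =
            aeval fun j => Ideal.Quotient.mk (Ideal.span {ℓ}) c *
              algebraMap ℂ (S ⧸ Ideal.span {ℓ}) (p j) := by
          refine MvPolynomial.algHom_ext fun j => ?_
          rw [aeval_X]
          exact Ideal.Quotient.eq.mpr (Ideal.mem_span_singleton.mpr (hθ j))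
        have h2 := DFunLike.congr_fun h1 f
        rw [aeval_mul_of_isHomogeneous hf] at h2
        have h3 : aeval (fun j => algebraMap ℂ (S ⧸ Ideal.span {ℓ}) (p j)) f = 0 := by
          have := aeval_algebraMap_apply (S ⧸ Ideal.span {ℓ}) p f
          rw [(vanishesTo_succ.mp h).1, map_zero] at this
          exact this
        rw [h3, mul_zero] at h2
        exact h2
      simpa using Ideal.mem_span_singleton.mp (Ideal.Quotient.eq_zero_iff_mem.mp h0)
    · have hd : ℓ ^ (m + 1) ∣ δ (θ f) := by
        rw [derivation_aeval]
        exact Finset.dvd_sum fun j _ =>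
          (ih hf.pderiv ((vanishesTo_succ.mp h).2 j)).mul_right _
      have hunit : IsUnit ((m + 1 : ℕ) : S) := by
        simpa using (IsUnit.mk0 ((m + 1 : ℕ) : ℂ) (Nat.cast_ne_zero.mpr m.succ_ne_zero)).map (algebraMap ℂ S)
      have hd' : ℓ ^ m * ℓ ∣ ℓ ^ m * (u * (δ ℓ * ((m + 1 : ℕ) : S))) := by
        rw [hu, Derivation.leibniz, Derivation.leibniz_pow] at hd
        have := (dvd_add_right (Dvd.intro (δ u) rfl)).mp hd
        rw [← pow_succ]
        convert this using 1
        simp only [Nat.add_sub_cancel, smul_eq_mul, ← Nat.cast_smul_eq_nsmul S]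
        ring
      have := (mul_dvd_mul_iff_left (pow_ne_zero m hℓ)).mp hd'
      rw [hu, pow_succ _ (m + 1)]
      exact mul_dvd_mul_left _ (((hδ.mul hunit).dvd_mul_right).mp this)

theorem totalDegree_pow_of_isDomain {σ : Type*} {f : MvPolynomial σ ℂ} (hf : f ≠ 0) (n : ℕ) :
    (f ^ n).totalDegree = n * f.totalDegree := by
  induction n with
  | zero => simp
  | succ n ih => rw [pow_succ, totalDegree_mul_of_isDomain (pow_ne_zero n hf) hf, ih]; ring

theorem totalDegree_prod_of_isDomain {σ ι : Type*} (s : Finset ι) {f : ι → MvPolynomial σ ℂ}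
    (hf : ∀ i, f i ≠ 0) : (∏ i ∈ s, f i).totalDegree = ∑ i ∈ s, (f i).totalDegree := by
  classical
  induction s using Finset.induction_on with
  | empty => simp
  | insert a s ha ih =>
    rw [Finset.prod_insert ha, Finset.sum_insert ha,
      totalDegree_mul_of_isDomain (hf a) (Finset.prod_ne_zero_iff.mpr fun i _ => hf i), ih]

theorem totalDegree_aeval_le {σ τ : Type*} {f : MvPolynomial σ ℂ} {g : σ → MvPolynomial τ ℂ}
    {n d : ℕ} (hf : f.totalDegree ≤ d) (hg : ∀ j, (g j).totalDegree ≤ n) :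
    (aeval g f).totalDegree ≤ d * n := by
  rw [aeval_def, eval₂_eq]
  refine totalDegree_finsetSum_le fun s hs => ?_
  refine (totalDegree_mul _ _).trans ?_
  rw [algebraMap_eq, totalDegree_C, zero_add]
  refine (totalDegree_finsetProd _ _).trans ?_
  refine (Finset.sum_le_sum (g := fun i => s i * n) fun i _ =>
    (totalDegree_pow _ _).trans (Nat.mul_le_mul_left _ (hg i))).trans ?_
  rw [← Finset.sum_mul]
  exact Nat.mul_le_mul_right _ ((le_totalDegree hs).trans hf)

theorem totalDegree_aeval_X_le {σ : Type*} (q : Polynomial ℂ) (i : σ) :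
    (Polynomial.aeval (X i : MvPolynomial σ ℂ) q).totalDegree ≤ q.natDegree := by
  rw [Polynomial.aeval_eq_sum_range]
  refine totalDegree_finsetSum_le fun j hj => ?_
  refine (totalDegree_smul_le _ _).trans ?_
  rw [totalDegree_X_pow]
  exact Nat.lt_succ_iff.mp (Finset.mem_range.mp hj)

theorem totalDegree_X_sub_C (t : ℂ) : (X 0 - C t : MvPolynomial (Fin 2) ℂ).totalDegree = 1 := by
  rw [sub_eq_add_neg, ← map_neg, totalDegree_add_eq_left_of_totalDegree_lt] <;> simp

theorem X_sub_C_ne_zero' (t : ℂ) : (X 0 - C t : MvPolynomial (Fin 2) ℂ) ≠ 0 := fun h => by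
  simpa [h] using totalDegree_X_sub_C t

theorem irreducible_X_sub_C' (t : ℂ) : Irreducible (X 0 - C t : MvPolynomial (Fin 2) ℂ) := by
  refine irreducible_of_totalDegree_eq_one (totalDegree_X_sub_C t) fun x hx => ?_
  have := hx (Finsupp.single 0 1)
  rw [coeff_sub, coeff_X, if_pos rfl, coeff_C,
    if_neg fun h => by simpa using DFunLike.congr_fun h 0, sub_zero] at this
  exact isUnit_of_dvd_one this

theorem le_totalDegree_X_pow_sub_X (e : ℕ) :
    e ≤ (X 0 ^ e - X 1 : MvPolynomial (Fin 2) ℂ).totalDegree := by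
  have h : (Finsupp.single 0 e : Fin 2 →₀ ℕ) ∈ (X 0 ^ e - X 1 : MvPolynomial (Fin 2) ℂ).support := by
    have h1 : ¬ (Finsupp.single 1 1 : Fin 2 →₀ ℕ) = Finsupp.single 0 e := fun h => by
      simpa using DFunLike.congr_fun h 1
    rw [mem_support_iff, coeff_sub, coeff_X_pow, coeff_X, if_pos rfl, if_neg h1]
    simp
  simpa using le_totalDegree h

theorem eval_aeval_X (x : Fin 2 → ℂ) (i : Fin 2) (q : Polynomial ℂ) :
    eval x (Polynomial.aeval (X i) q) = q.eval (x i) := by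
  rw [← coe_aeval_eq_eval, RingHom.coe_coe, ← Polynomial.aeval_algHom_apply, aeval_X,
    Polynomial.coe_aeval_eq_eval]

/-- The de Jonquières substitution contracting the curve `Y ^ e = Z` to the point `(0 : 0 : 1)`. -/
noncomputable def deJonq (e : ℕ) (Q β : Polynomial ℂ) :
    MvPolynomial (Fin 3) ℂ →ₐ[ℂ] MvPolynomial (Fin 2) ℂ :=
  aeval ![X 0 ^ e - X 1, X 0 * (X 0 ^ e - X 1),
    Polynomial.aeval (X 0) β + Polynomial.aeval (X 0) Q * X 1]

/-- The configuration consisting of `(0 : 0 : 1)` and of points on the curve `z = -Q(y)`. -/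
noncomputable def curvePoints {n : ℕ} (t : Fin n → ℂ) (Q : Polynomial ℂ) : Fin (n + 1) → Fin 3 → ℂ :=
  Fin.cons ![0, 0, 1] fun i => ![1, t i, -Q.eval (t i)]

section DeJonquieres

variable {n e : ℕ} {t : Fin n → ℂ} {Q β : Polynomial ℂ}

theorem deJonq_X_zero : deJonq e Q β (X 0) = X 0 ^ e - X 1 := by simp [deJonq]

theorem deJonq_X_one : deJonq e Q β (X 1) = X 0 * (X 0 ^ e - X 1) := by simp [deJonq]

theorem deJonq_X_two : deJonq e Q β (X 2) =
    Polynomial.aeval (X 0) β + Polynomial.aeval (X 0) Q * X 1 := by simp [deJonq]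

theorem eval_add_pow_mul_eval
    (hG : β + Polynomial.X ^ e * Q = ∏ i, (Polynomial.X - Polynomial.C (t i))) (y : ℂ) :
    β.eval y + y ^ e * Q.eval y = ∏ i, (y - t i) := by
  simpa [Polynomial.eval_prod] using congrArg (Polynomial.eval y) hG

theorem eval_add_pow_mul_eval_root
    (hG : β + Polynomial.X ^ e * Q = ∏ i, (Polynomial.X - Polynomial.C (t i))) (i : Fin n) :
    β.eval (t i) + t i ^ e * Q.eval (t i) = 0 := by
  rw [eval_add_pow_mul_eval hG]
  exact Finset.prod_eq_zero (Finset.mem_univ i) (sub_self _)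

theorem X_pow_sub_X_ne_zero (he : 1 ≤ e) : (X 0 ^ e - X 1 : MvPolynomial (Fin 2) ℂ) ≠ 0 := by
  intro h
  have := le_totalDegree_X_pow_sub_X e
  rw [h, totalDegree_zero] at this
  omega

theorem X_pow_sub_X_pow_dvd_deJonq (he : 1 ≤ e)
    {f : MvPolynomial (Fin 3) ℂ} {d m : ℕ} (hf : f.IsHomogeneous d)
    (h : VanishesTo ![0, 0, 1] m f) : (X 0 ^ e - X 1) ^ m ∣ deJonq e Q β f := by
  refine pow_dvd_of_vanishesTo (pderiv 1) (X_pow_sub_X_ne_zero he) (by simp [pderiv_X]) _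
    (Polynomial.aeval (X 0) (β + Polynomial.X ^ e * Q)) (fun j => ?_) hf h
  fin_cases j
  · simp [deJonq_X_zero]
  · simp [deJonq_X_one]
  · refine ⟨-Polynomial.aeval (X 0) Q, ?_⟩
    simp [deJonq_X_two]
    ring

theorem X_sub_C_dvd_aeval_sub (r : Polynomial ℂ) (a : ℂ) :
    (X 0 - C a : MvPolynomial (Fin 2) ℂ) ∣ Polynomial.aeval (X 0) r - C (r.eval a) := by
  have h := map_dvd (Polynomial.aeval (X 0 : MvPolynomial (Fin 2) ℂ))
    (Polynomial.X_sub_C_dvd_sub_C_eval (p := r) (a := a))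
  simpa [MvPolynomial.algebraMap_eq] using h

theorem X_sub_C_pow_dvd_deJonq
    (hG : β + Polynomial.X ^ e * Q = ∏ i, (Polynomial.X - Polynomial.C (t i)))
    {f : MvPolynomial (Fin 3) ℂ} {d m : ℕ} (hf : f.IsHomogeneous d) (i : Fin n)
    (h : VanishesTo ![1, t i, -Q.eval (t i)] m f) :
    (X 0 - C (t i)) ^ m ∣ deJonq e Q β f := by
  refine pow_dvd_of_vanishesTo (pderiv 0) (X_sub_C_ne_zero' _) (by simp) _
    (X 0 ^ e - X 1) (fun j => ?_) hf h
  fin_cases j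
  · simp [deJonq_X_zero]
  · refine ⟨X 0 ^ e - X 1, ?_⟩
    simp [deJonq_X_one, MvPolynomial.algebraMap_eq]
    ring
  · have h0 : C (β.eval (t i)) + C (t i) ^ e * C (Q.eval (t i)) = (0 : MvPolynomial (Fin 2) ℂ) := by
      rw [← map_pow, ← map_mul, ← map_add, eval_add_pow_mul_eval_root hG, map_zero]
    have h1 := X_sub_C_dvd_aeval_sub β (t i)
    have h2 := X_sub_C_dvd_aeval_sub Q (t i)
    have h3 := sub_dvd_pow_sub_pow (X 0 : MvPolynomial (Fin 2) ℂ) (C (t i)) e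
    convert (h1.add (h2.mul_right (X 1))).add (h3.mul_right (C (Q.eval (t i)))) using 1
    simp only [Fin.reduceFinMk, deJonq_X_two, MvPolynomial.algebraMap_eq, Matrix.cons_val, map_neg]
    linear_combination h0

theorem algHom_deJonq {A : Type*} [CommRing A] [Algebra ℂ A] (φ : MvPolynomial (Fin 2) ℂ →ₐ[ℂ] A)
    (f : MvPolynomial (Fin 3) ℂ) : φ (deJonq e Q β f) = aeval (fun j => φ (deJonq e Q β (X j))) f :=
  DFunLike.congr_fun (aeval_unique (φ.comp (deJonq e Q β))) f

theorem deJonq_injective_of_isHomogeneous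
    (hG : β + Polynomial.X ^ e * Q = ∏ i, (Polynomial.X - Polynomial.C (t i)))
    {f : MvPolynomial (Fin 3) ℂ} {d : ℕ} (hf : f.IsHomogeneous d) (h : deJonq e Q β f = 0) :
    f = 0 := by
  have key : ∀ y z : ℂ, ∏ i, (y - t i) ≠ 0 → z + Q.eval y ≠ 0 → aeval ![1, y, z] f = 0 := by
    intro y z hy hz
    set u := (y ^ e * z - β.eval y) / (z + Q.eval y) with hu
    have hu' : u * (z + Q.eval y) = y ^ e * z - β.eval y := div_mul_cancel₀ _ hz
    have hw : y ^ e - u ≠ 0 := by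
      intro h0
      apply hy
      rw [← eval_add_pow_mul_eval hG]
      linear_combination (z + Q.eval y) * h0 + hu'
    have h1 := congrArg (aeval ![y, u]) h
    rw [algHom_deJonq, map_zero] at h1
    have h2 : (fun j => aeval ![y, u] (deJonq e Q β (X j))) =
        fun j => (y ^ e - u) * ![1, y, z] j := by
      funext j
      fin_cases j
      · simp [deJonq_X_zero]
      · simp [deJonq_X_one, mul_comm]
      · simp only [Fin.reduceFinMk, deJonq_X_two, map_add, map_mul, ← Polynomial.aeval_algHom_apply,
          aeval_X, Matrix.cons_val, Polynomial.coe_aeval_eq_eval]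
        linear_combination hu'
    rw [h2, aeval_mul_of_isHomogeneous hf] at h1
    exact (mul_eq_zero.mp h1).resolve_left (pow_ne_zero _ hw)
  have hGne : (∏ i, (X 0 - C (t i)) : MvPolynomial (Fin 2) ℂ) ≠ 0 :=
    Finset.prod_ne_zero_iff.mpr fun i _ => X_sub_C_ne_zero' _
  have hQne : (X 1 + Polynomial.aeval (X 0) Q : MvPolynomial (Fin 2) ℂ) ≠ 0 := by
    intro h0
    have h1 := congrArg (aeval ![(0 : ℂ), 1 - Q.eval 0]) h0
    simp [eval_aeval_X] at h1
  have hdeh : aeval ![1, X 0, X 1] f = (0 : MvPolynomial (Fin 2) ℂ) := by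
    have : aeval ![1, X 0, X 1] f * (∏ i, (X 0 - C (t i))) *
        (X 1 + Polynomial.aeval (X 0) Q) = (0 : MvPolynomial (Fin 2) ℂ) := by
      refine MvPolynomial.funext fun x => ?_
      by_cases hy : ∏ i, (x 0 - t i) = 0
      · simp [hy]
      by_cases hz : x 1 + Q.eval (x 0) = 0
      · rw [map_mul, map_add, eval_aeval_X, eval_X, hz, mul_zero, map_zero]
      · have h1 : aeval x (aeval ![1, X 0, X 1] f : MvPolynomial (Fin 2) ℂ) = 0 := by
          rw [← key _ _ hy hz, ← AlgHom.comp_apply, comp_aeval]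
          congr 2
          funext j
          fin_cases j <;> simp
        rw [map_mul, map_mul, ← coe_aeval_eq_eval, RingHom.coe_coe, h1]
        simp
    exact (mul_eq_zero.mp ((mul_eq_zero.mp this).resolve_right hQne)).resolve_right hGne
  have hfX : f * X 0 = 0 := by
    refine MvPolynomial.funext fun x => ?_
    by_cases hx : x 0 = 0
    · simp [hx]
    have h1 : aeval ![1, x 1 / x 0, x 2 / x 0] f = 0 := by
      have h2 := congrArg (aeval ![x 1 / x 0, x 2 / x 0]) hdeh
      rw [← AlgHom.comp_apply, comp_aeval, map_zero] at h2
      rw [← h2]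
      congr 2
      funext j
      fin_cases j <;> simp
    have h2 := aeval_mul_of_isHomogeneous hf (x 0) ![1, x 1 / x 0, x 2 / x 0]
    have h3 : (fun j => x 0 * ![1, x 1 / x 0, x 2 / x 0] j) = x := by
      funext j
      fin_cases j <;> simp [mul_div_cancel₀, hx]
    rw [h1, h3, mul_zero] at h2
    rw [map_mul, ← coe_aeval_eq_eval, RingHom.coe_coe, h2]
    simp
  exact (mul_eq_zero.mp hfX).resolve_right (X_ne_zero 0)

theorem dvd_deJonq (he : 1 ≤ e) (ht : Function.Injective t)
    (hG : β + Polynomial.X ^ e * Q = ∏ i, (Polynomial.X - Polynomial.C (t i)))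
    {f : MvPolynomial (Fin 3) ℂ} {d m₀ : ℕ} (hf : f ∈ linSys (curvePoints t Q) d (qh n m₀)) :
    (X 0 ^ e - X 1) ^ m₀ * ∏ i, (X 0 - C (t i)) ^ 6 ∣ deJonq e Q β f := by
  rw [mem_linSys, qh_eq_cons] at hf
  refine IsRelPrime.mul_dvd (IsRelPrime.prod_right fun i _ => IsRelPrime.pow ?_)
    (X_pow_sub_X_pow_dvd_deJonq he hf.1 (hf.2 0))
    (Finset.prod_dvd_of_isRelPrime (fun i _ j _ hij => IsRelPrime.pow ?_)
      fun i _ => X_sub_C_pow_dvd_deJonq hG hf.1 i (hf.2 i.succ))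
  · refine (((irreducible_X_sub_C' (t i)).isRelPrime_iff_not_dvd).mpr ?_).symm
    rintro ⟨g, hg⟩
    simpa using congrArg (eval ![t i, t i ^ e + 1]) hg
  · refine ((irreducible_X_sub_C' (t i)).isRelPrime_iff_not_dvd).mpr ?_
    rintro ⟨g, hg⟩
    have := congrArg (eval ![t i, 0]) hg
    simp only [map_sub, eval_X, eval_C, map_mul, Matrix.cons_val_zero, sub_self, zero_mul,
      sub_eq_zero] at this
    exact hij (ht this)

theorem totalDegree_deJonq_X_le (he : 1 ≤ e) (hQ : Q.natDegree ≤ e) (hβ : β.natDegree ≤ e) (j : Fin 3) :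
    (deJonq e Q β (X j)).totalDegree ≤ e + 1 := by
  have hW : (X 0 ^ e - X 1 : MvPolynomial (Fin 2) ℂ).totalDegree ≤ e ⊔ 1 := by
    refine (totalDegree_sub _ _).trans ?_
    simp
  rw [max_eq_left he] at hW
  fin_cases j
  · exact deJonq_X_zero (Q := Q) (β := β) ▸ hW.trans e.le_succ
  · rw [Fin.mk_one, deJonq_X_one]
    refine (totalDegree_mul _ _).trans ?_
    rw [totalDegree_X]
    omega
  · change (deJonq e Q β (X 2)).totalDegree ≤ e + 1
    rw [deJonq_X_two]
    refine (totalDegree_add _ _).trans (max_le ?_ ((totalDegree_mul _ _).trans ?_))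
    · exact (totalDegree_aeval_X_le _ _).trans (hβ.trans e.le_succ)
    · rw [totalDegree_X]
      exact Nat.succ_le_succ ((totalDegree_aeval_X_le _ _).trans hQ)

theorem totalDegree_le_of_deJonq_eq {k : ℕ} (he : 1 ≤ e) {t : Fin (2 * e) → ℂ}
    (hQ : Q.natDegree ≤ e) (hβ : β.natDegree ≤ e) (hk : 2 ≤ k)
    {f : MvPolynomial (Fin 3) ℂ} (hf : f.IsHomogeneous (5 * e + k)) {H : MvPolynomial (Fin 2) ℂ}
    (h : deJonq e Q β f =
      (X 0 ^ e - X 1) ^ (5 * e + k - 7) * (∏ i, (X 0 - C (t i)) ^ 6) * H) :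
    H.totalDegree ≤ k := by
  by_cases hH : H = 0
  · simp [hH]
  have h1 : (deJonq e Q β f).totalDegree ≤ (5 * e + k) * (e + 1) := by
    have h0 := algHom_deJonq (e := e) (Q := Q) (β := β) (AlgHom.id ℂ _) f
    rw [AlgHom.id_apply] at h0
    rw [h0]
    exact totalDegree_aeval_le hf.totalDegree_le (totalDegree_deJonq_X_le he hQ hβ)
  have hW := X_pow_sub_X_ne_zero he
  have hP : ∀ i, (X 0 - C (t i) : MvPolynomial (Fin 2) ℂ) ^ 6 ≠ 0 := fun i =>
    pow_ne_zero _ (X_sub_C_ne_zero' _)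
  rw [h, totalDegree_mul_of_isDomain (mul_ne_zero (pow_ne_zero _ hW)
    (Finset.prod_ne_zero_iff.mpr fun i _ => hP i)) hH,
    totalDegree_mul_of_isDomain (pow_ne_zero _ hW) (Finset.prod_ne_zero_iff.mpr fun i _ => hP i),
    totalDegree_pow_of_isDomain hW, totalDegree_prod_of_isDomain _ hP] at h1
  simp only [totalDegree_pow_of_isDomain (X_sub_C_ne_zero' _), totalDegree_X_sub_C,
    Finset.sum_const, Finset.card_univ, Fintype.card_fin, smul_eq_mul] at h1
  have h2 := Nat.mul_le_mul_left (5 * e + k - 7) (le_totalDegree_X_pow_sub_X e)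
  obtain ⟨m, hm⟩ : ∃ m, 5 * e + k = m + 7 := ⟨5 * e + k - 7, by omega⟩
  rw [hm, Nat.add_sub_cancel] at h1 h2
  nlinarith

theorem eval_eq_zero_of_deJonq_eq (ht : Function.Injective t)
    (hG : β + Polynomial.X ^ e * Q = ∏ i, (Polynomial.X - Polynomial.C (t i)))
    {f : MvPolynomial (Fin 3) ℂ} {m₀ : ℕ} (hf : f.IsHomogeneous (m₀ + 7))
    {H : MvPolynomial (Fin 2) ℂ}
    (h : deJonq e Q β f = (X 0 ^ e - X 1) ^ m₀ * (∏ i, (X 0 - C (t i)) ^ 6) * H) (i : Fin n) :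
    eval ![t i, t i ^ e] H = 0 := by
  set ψ : MvPolynomial (Fin 2) ℂ →ₐ[ℂ] Polynomial ℂ :=
    aeval ![Polynomial.X + Polynomial.C (t i),
      (Polynomial.X + Polynomial.C (t i)) ^ e - Polynomial.X] with hψ
  have hψ0 : ∀ P, (ψ P).eval 0 = eval ![t i, t i ^ e] P := by
    intro P
    rw [← Polynomial.coe_aeval_eq_eval, ← coe_aeval_eq_eval, RingHom.coe_coe,
      ← AlgHom.comp_apply, hψ, comp_aeval]
    congr 2
    funext j
    fin_cases j <;> simp
  have hX : ∀ j, Polynomial.X ∣ ψ (deJonq e Q β (X j)) := by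
    intro j
    rw [Polynomial.X_dvd_iff, Polynomial.coeff_zero_eq_eval_zero, hψ0]
    fin_cases j
    · simp [deJonq_X_zero]
    · simp [deJonq_X_one]
    · simp [deJonq_X_two, eval_aeval_X, mul_comm (Q.eval _), eval_add_pow_mul_eval_root hG]
  choose g hg using hX
  have h1 := algHom_deJonq (e := e) (Q := Q) (β := β) ψ f
  simp only [hg] at h1
  rw [aeval_mul_of_isHomogeneous hf, h, map_mul, map_mul, map_pow, map_prod] at h1
  simp only [map_pow] at h1
  rw [Finset.prod_pow, ← Finset.mul_prod_erase _ _ (Finset.mem_univ i)] at h1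
  have hW : ψ (X 0 ^ e - X 1) = Polynomial.X := by simp [hψ]
  have hi : ψ (X 0 - C (t i)) = Polynomial.X := by simp [hψ]
  rw [hW, hi, mul_pow] at h1
  set R := ∏ j ∈ Finset.univ.erase i, ψ (X 0 - C (t j)) with hR
  have h2 : R ^ 6 * ψ H = Polynomial.X * aeval g f := by
    refine mul_left_cancel₀ (pow_ne_zero (m₀ + 6) Polynomial.X_ne_zero) ?_
    linear_combination h1
  have h3 := congrArg (Polynomial.eval 0) h2
  rw [Polynomial.eval_mul, Polynomial.eval_mul, Polynomial.eval_X, zero_mul, hψ0,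
    Polynomial.eval_pow, hR, Polynomial.eval_prod] at h3
  refine (mul_eq_zero.mp h3).resolve_left (pow_ne_zero _ (Finset.prod_ne_zero_iff.mpr ?_))
  intro j hj h4
  rw [hψ0] at h4
  simp only [map_sub, eval_X, eval_C, Matrix.cons_val_zero, sub_eq_zero] at h4
  exact (Finset.ne_of_mem_erase hj) (ht h4).symm

end DeJonquieres

theorem finrank_restrictTotalDegree_le (k : ℕ) :
    Module.finrank ℂ (restrictTotalDegree (Fin 2) ℂ k) ≤ (k + 2).choose 2 := by
  classical
  set s := (tri (k + 1)).image fun x => (X 0 ^ x.1 * X 1 ^ x.2 : MvPolynomial (Fin 2) ℂ) with hs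
  have h : restrictTotalDegree (Fin 2) ℂ k ≤ Submodule.span ℂ (s : Set (MvPolynomial (Fin 2) ℂ)) := by
    intro f hf
    rw [mem_restrictTotalDegree] at hf
    rw [f.as_sum]
    refine Submodule.sum_mem _ fun ν hν => ?_
    rw [← mul_one (coeff ν f), ← smul_eq_mul, ← smul_monomial]
    refine Submodule.smul_mem _ _ (Submodule.subset_span ?_)
    rw [SetLike.mem_coe, hs, Finset.mem_image]
    refine ⟨(ν 0, ν 1), mem_tri.mpr ?_, ?_⟩
    · have := (le_totalDegree hν).trans hf
      rw [Finsupp.sum_fintype _ _ fun _ => rfl, Fin.sum_univ_two] at this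
      exact Nat.lt_succ_of_le this
    · rw [monomial_eq, Finsupp.prod_fintype _ _ fun _ => pow_zero _, Fin.prod_univ_two, C_1,
        one_mul]
  have : Module.Finite ℂ (Submodule.span ℂ (s : Set (MvPolynomial (Fin 2) ℂ))) :=
    Module.Finite.span_finset _ _
  calc _ ≤ _ := Submodule.finrank_mono h
    _ ≤ s.card := finrank_span_finset_le_card s
    _ ≤ (tri (k + 1)).card := Finset.card_image_le
    _ = _ := card_tri _

theorem le_card_image_tri {e k : ℕ} (he : 1 ≤ e) (hk : 2 ≤ k) (hk5 : k ≤ 5)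
    (h : 2 * e < (k + 2).choose 2) :
    2 * e ≤ ((tri (k + 1)).image fun x => x.1 + e * x.2).card := by
  interval_cases k <;> simp only [Nat.reduceAdd, Nat.choose] at h <;>
    have : e ≤ 10 := by omega
  all_goals interval_cases e <;> first | omega | decide

/-- Polynomials of degree at most `k` interpolate arbitrary values at the points
`(2 ^ i, 2 ^ (i * e))` of the curve `y ^ e = z`. -/
theorem finrank_add_le_of_eval_eq_zero {n e k : ℕ} (T : Submodule ℂ (MvPolynomial (Fin 2) ℂ))
    (h : n ≤ ((tri (k + 1)).image fun x => x.1 + e * x.2).card)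
    (hT : ∀ f ∈ T, f.totalDegree ≤ k ∧
      ∀ i : Fin n, eval ![(2 : ℂ) ^ (i : ℕ), ((2 : ℂ) ^ (i : ℕ)) ^ e] f = 0) :
    Module.finrank ℂ T + n ≤ (k + 2).choose 2 := by
  set E : restrictTotalDegree (Fin 2) ℂ k →ₗ[ℂ] Fin n → ℂ :=
    (LinearMap.pi fun i => (aeval ![(2 : ℂ) ^ (i : ℕ), ((2 : ℂ) ^ (i : ℕ)) ^ e]).toLinearMap) ∘ₗ
      Submodule.subtype _ with hE
  have hsurj : Function.Surjective E := by
    obtain ⟨φ⟩ := Function.Embedding.nonempty_of_card_le (α := Fin n)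
      (β := ((tri (k + 1)).image fun x => x.1 + e * x.2)) (by simpa using h)
    have hφ : ∀ j, ∃ x ∈ tri (k + 1), x.1 + e * x.2 = φ j := fun j =>
      Finset.mem_image.mp (φ j).2
    choose x hx hxφ using hφ
    set V : Matrix (Fin n) (Fin n) ℂ :=
      (Matrix.vandermonde fun j => (2 : ℂ) ^ (x j).1 * (2 : ℂ) ^ (e * (x j).2)).transpose with hV
    have hunit : IsUnit V := by
      rw [Matrix.isUnit_iff_isUnit_det, hV, Matrix.det_transpose, isUnit_iff_ne_zero,
        Matrix.det_vandermonde_ne_zero_iff]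
      intro a b hab
      simp only [← pow_add, hxφ] at hab
      have : (2 : ℕ) ^ (φ a : ℕ) = 2 ^ (φ b : ℕ) := by exact_mod_cast hab
      exact φ.injective (Subtype.ext (Nat.pow_right_injective le_rfl this))
    intro v
    obtain ⟨c, hc⟩ := (Matrix.mulVec_surjective_iff_isUnit.mpr hunit) v
    refine ⟨⟨∑ j, c j • (X 0 ^ (x j).1 * X 1 ^ (x j).2), Submodule.sum_mem _ fun j _ =>
      Submodule.smul_mem _ _ ?_⟩, ?_⟩
    · rw [mem_restrictTotalDegree]
      refine (totalDegree_mul _ _).trans ?_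
      rw [totalDegree_X_pow, totalDegree_X_pow]
      exact Nat.lt_succ_iff.mp (mem_tri.mp (hx j))
    · rw [← hc]
      funext i
      simp only [hE, hV, LinearMap.comp_apply, Submodule.subtype_apply, LinearMap.pi_apply,
        AlgHom.toLinearMap_apply, map_sum, map_smul, map_mul, map_pow, aeval_X,
        Matrix.cons_val_zero, Matrix.cons_val_one, Matrix.mulVec, dotProduct,
        Matrix.transpose_apply, Matrix.vandermonde_apply, smul_eq_mul]
      refine Finset.sum_congr rfl fun j _ => ?_
      ring
  have hle : T ≤ (LinearMap.ker E).map (Submodule.subtype _) := by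
    intro f hf
    refine ⟨⟨f, (mem_restrictTotalDegree _ _ _).mpr (hT f hf).1⟩, ?_, rfl⟩
    rw [SetLike.mem_coe, LinearMap.mem_ker]
    funext i
    exact (hT f hf).2 i
  have h1 := (Submodule.finrank_mono hle).trans (Submodule.finrank_map_le _ _)
  have h2 := E.finrank_range_add_finrank_ker
  rw [LinearMap.range_eq_top.mpr hsurj, finrank_top, Module.finrank_fin_fun] at h2
  have h3 := finrank_restrictTotalDegree_le k
  omega

theorem exists_finrank_linSys_qh_le {e k : ℕ} (he : 1 ≤ e) (hk : 2 ≤ k) (hk5 : k ≤ 5)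
    (h : 2 * e < (k + 2).choose 2) :
    ∃ p : Fin (2 * e + 1) → Fin 3 → ℂ,
      Module.finrank ℂ (linSys p (5 * e + k) (qh (2 * e) (5 * e + k - 7))) + 2 * e ≤
        (k + 2).choose 2 := by
  set t : Fin (2 * e) → ℂ := fun i => (2 : ℂ) ^ (i : ℕ) with ht
  have htinj : Function.Injective t := fun i j hij =>
    Fin.ext (Nat.pow_right_injective le_rfl
      (show 2 ^ (i : ℕ) = 2 ^ (j : ℕ) by simp only [ht] at hij; exact_mod_cast hij))
  set G : Polynomial ℂ := ∏ i, (Polynomial.X - Polynomial.C (t i)) with hG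
  have hXe : (Polynomial.X ^ e : Polynomial ℂ).Monic := Polynomial.monic_X_pow e
  set Q := G /ₘ Polynomial.X ^ e
  set β := G %ₘ Polynomial.X ^ e
  have hGQ : β + Polynomial.X ^ e * Q = ∏ i, (Polynomial.X - Polynomial.C (t i)) :=
    Polynomial.modByMonic_add_div _ _
  have hQ : Q.natDegree ≤ e := by
    rw [Polynomial.natDegree_divByMonic _ hXe, hG,
      Polynomial.natDegree_finsetProd_X_sub_C_eq_card, Polynomial.natDegree_X_pow,
      Finset.card_univ, Fintype.card_fin]
    omega
  have hβ : β.natDegree ≤ e := by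
    simpa using Polynomial.natDegree_modByMonic_le G hXe
  refine ⟨curvePoints t Q, ?_⟩
  set L := linSys (curvePoints t Q) (5 * e + k) (qh (2 * e) (5 * e + k - 7)) with hL
  set K : MvPolynomial (Fin 2) ℂ :=
    (X 0 ^ e - X 1) ^ (5 * e + k - 7) * ∏ i, (X 0 - C (t i)) ^ 6 with hK
  have hK0 : K ≠ 0 := mul_ne_zero (pow_ne_zero _ (X_pow_sub_X_ne_zero he))
    (Finset.prod_ne_zero_iff.mpr fun i _ => pow_ne_zero _ (X_sub_C_ne_zero' _))
  set J : L →ₗ[ℂ] MvPolynomial (Fin 2) ℂ := (deJonq e Q β).toLinearMap ∘ₗ L.subtype with hJ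
  have hJinj : Function.Injective J := by
    rw [← LinearMap.ker_eq_bot, LinearMap.ker_eq_bot']
    exact fun f hf => Subtype.ext
      (deJonq_injective_of_isHomogeneous hGQ (mem_linSys.mp f.2).1 hf)
  set M := LinearMap.mulLeft ℂ K
  have hMinj : Function.Injective M := mul_right_injective₀ hK0
  have hrange : LinearMap.range J ≤ LinearMap.range M := by
    rintro _ ⟨f, rfl⟩
    obtain ⟨H, hH⟩ := dvd_deJonq he htinj hGQ f.2
    exact ⟨H, hH.symm⟩
  set T := (LinearMap.range J).comap M with hT
  have h1 : T.map M = LinearMap.range J := by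
    rw [hT, Submodule.map_comap_eq, inf_eq_right.mpr hrange]
  have h2 : Module.finrank ℂ T = Module.finrank ℂ L := by
    rw [(Submodule.equivMapOfInjective M hMinj T).finrank_eq, h1,
      LinearMap.finrank_range_of_inj hJinj]
  rw [← h2]
  refine finrank_add_le_of_eval_eq_zero T (le_card_image_tri he hk hk5 h) ?_
  rintro H ⟨f, hf⟩
  have hf1 := (mem_linSys.mp f.2).1
  refine ⟨totalDegree_le_of_deJonq_eq he hQ hβ hk hf1 hf, fun i => ?_⟩
  refine eval_eq_zero_of_deJonq_eq htinj hGQ ?_ hf i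
  rwa [Nat.sub_add_cancel (by omega)]

theorem generically_finrank_linSys_qh {e k : ℕ} (he : 1 ≤ e) (hk : 2 ≤ k) (hk5 : k ≤ 5)
    (h : 2 * e < (k + 2).choose 2) :
    Generically (2 * e + 1) fun p =>
      Module.finrank ℂ (linSys p (5 * e + k) (qh (2 * e) (5 * e + k - 7))) + 2 * e =
        (k + 2).choose 2 := by
  obtain ⟨p₀, hp₀⟩ := exists_finrank_linSys_qh_le he hk hk5 h
  obtain ⟨P, hP, hle⟩ :=
    exists_finrank_linSys_le p₀ (5 * e + k) (qh (2 * e) (5 * e + k - 7))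
  refine ⟨P, hP, fun p _ hp => le_antisymm ?_ (choose_le_finrank_linSys_qh he hk (by omega) p)⟩
  exact (Nat.add_le_add_right (hle p hp) _).trans hp₀

theorem virtDim_qh {d n m₀ : ℕ} :
    virtDim d (qh n m₀) = (d * (d + 3) : ℤ) / 2 - ((m₀ * (m₀ + 1) : ℤ) / 2 + n * 21) := by
  simp [virtDim, qh_eq_cons, Fin.sum_univ_succ]

theorem virtDim_and_generically {e k d m₀ : ℕ} {a b : ℤ} (he : 1 ≤ e) (hk : 2 ≤ k) (hk5 : k ≤ 5)
    (h : 2 * e < (k + 2).choose 2) (hd : d = 5 * e + k) (hm : m₀ = 5 * e + k - 7)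
    (ha : ((k + 2).choose 2 : ℤ) - 1 = a) (hb : 8 * (k : ℤ) - 21 = b) (hba : b < a) :
    virtDim d (qh (2 * e) m₀) = -2 * (e : ℤ) + b ∧
      Generically (2 * e + 1) fun p =>
        projDim p d (qh (2 * e) m₀) = a - 2 * (e : ℤ) ∧
        projDim p d (qh (2 * e) m₀) > max (-1) (virtDim d (qh (2 * e) m₀)) := by
  have hv : virtDim d (qh (2 * e) m₀) = -2 * (e : ℤ) + b := by
    have hdm : (d : ℤ) = m₀ + 7 := by omega
    have hd' : (d : ℤ) = 5 * e + k := by omega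
    have h1 : (d * (d + 3) : ℤ) = m₀ * (m₀ + 1) + 2 * (8 * m₀ + 35) := by rw [hdm]; ring
    rw [virtDim_qh, h1, Int.add_mul_ediv_left _ _ two_ne_zero]
    push_cast
    omega
  refine ⟨hv, ?_⟩
  obtain ⟨P, hP, hgen⟩ := generically_finrank_linSys_qh he hk hk5 h
  refine ⟨P, hP, fun p hp hpP => ?_⟩
  have h1 := hgen p hp hpP
  rw [← hm, ← hd] at h1
  simp only [hv, projDim]
  have h2 : (Module.finrank ℂ (linSys p d (qh (2 * e) m₀)) : ℤ) + 2 * e = (k + 2).choose 2 := by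
    exact_mod_cast h1
  have h3 : (2 * e : ℤ) < (k + 2).choose 2 := by exact_mod_cast h
  refine ⟨by omega, max_lt (by omega) (by omega)⟩

theorem special_L_5e_families :
    (∀ e : ℕ, 1 ≤ e → e ≤ 2 →
      virtDim (5 * e + 2) (qh (2 * e) (5 * e - 5)) = -2 * (e : ℤ) - 5 ∧
      Generically (2 * e + 1) (fun p =>
        projDim p (5 * e + 2) (qh (2 * e) (5 * e - 5)) = 5 - 2 * (e : ℤ) ∧
        projDim p (5 * e + 2) (qh (2 * e) (5 * e - 5)) >
          max (-1) (virtDim (5 * e + 2) (qh (2 * e) (5 * e - 5))))) ∧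
    (∀ e : ℕ, 1 ≤ e → e ≤ 4 →
      virtDim (5 * e + 3) (qh (2 * e) (5 * e - 4)) = -2 * (e : ℤ) + 3 ∧
      Generically (2 * e + 1) (fun p =>
        projDim p (5 * e + 3) (qh (2 * e) (5 * e - 4)) = 9 - 2 * (e : ℤ) ∧
        projDim p (5 * e + 3) (qh (2 * e) (5 * e - 4)) >
          max (-1) (virtDim (5 * e + 3) (qh (2 * e) (5 * e - 4))))) ∧
    (∀ e : ℕ, 1 ≤ e → e ≤ 7 →
      virtDim (5 * e + 4) (qh (2 * e) (5 * e - 3)) = -2 * (e : ℤ) + 11 ∧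
      Generically (2 * e + 1) (fun p =>
        projDim p (5 * e + 4) (qh (2 * e) (5 * e - 3)) = 14 - 2 * (e : ℤ) ∧
        projDim p (5 * e + 4) (qh (2 * e) (5 * e - 3)) >
          max (-1) (virtDim (5 * e + 4) (qh (2 * e) (5 * e - 3))))) ∧
    (∀ e : ℕ, 1 ≤ e → e ≤ 10 →
      virtDim (5 * e + 5) (qh (2 * e) (5 * e - 2)) = -2 * (e : ℤ) + 19 ∧
      Generically (2 * e + 1) (fun p =>
        projDim p (5 * e + 5) (qh (2 * e) (5 * e - 2)) = 20 - 2 * (e : ℤ) ∧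
        projDim p (5 * e + 5) (qh (2 * e) (5 * e - 2)) >
          max (-1) (virtDim (5 * e + 5) (qh (2 * e) (5 * e - 2))))) := by
  refine ⟨fun e he h => ?_, fun e he h => ?_, fun e he h => ?_, fun e he h => ?_⟩
  · exact virtDim_and_generically (k := 2) he (by norm_num) (by norm_num)
      (by simp only [Nat.choose]; omega) rfl (by omega) (by norm_num [Nat.choose]) (by norm_num)
      (by norm_num)
  · exact virtDim_and_generically (k := 3) he (by norm_num) (by norm_num)
      (by simp only [Nat.choose]; omega) rfl (by omega) (by norm_num [Nat.choose]) (by norm_num)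
      (by norm_num)
  · exact virtDim_and_generically (k := 4) he (by norm_num) (by norm_num)
      (by simp only [Nat.choose]; omega) rfl (by omega) (by norm_num [Nat.choose]) (by norm_num)
      (by norm_num)
  · exact virtDim_and_generically (k := 5) he (by norm_num) (by norm_num)
      (by simp only [Nat.choose]; omega) rfl (by omega) (by norm_num [Nat.choose]) (by norm_num)
      (by norm_num)
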